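/- Let n ∈ ℕ with n ≥ 3 and let F be a smooth symmetric 2-cotensor field on ℝ^n which is even, i.e. F(−x)(V, W) = F(x)(V, W) for all x, V, W ∈ ℝ^n. Suppose that for every unit-speed great circle γ on the unit sphere S^{n−1} ⊂ ℝ^n and for all coordinate indices 1 ≤ i, j ≤ n one has ∫₀^{2π} γ_i(t)·γ_j(t)·F(γ(t))(γ'(t), γ'(t)) dt = 0, where γ_i(t) denotes the i-th coordinate of γ(t). Then F(x)(V, V) = 0 for every x ∈ ℝ^n with ‖x‖ = 1 and every V ∈ ℝ^n with ⟨x, V⟩ = 0. -/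

import Mathlib

open Real intervalIntegral
open scoped RealInnerProductSpace

/-!
Fix a pole `a` and a tangent vector `V` at `a`, both of norm one, and a unit vector `w` orthogonal
to both. Use only the weight `⟪γ, w⟫ ^ 2`, and average the hypothesis over the rotations about `a`
(in the span of `a, w, V`) of the great circle reaching height `p`. The weight is not invariant, so
the average keeps the factor `cos ψ ^ 2` of the longitude `ψ`, and it involves the means `R s` and
`T s` over the parallel at height `s` of the meridian and parallel components of `F`; the mixed
components enter through the derivative of a function along a closed curve and drop out. The result
is `∫ t in 0..2π, ((p sin t)² R (p cos t) + (1 - p²) T (p cos t)) = 0` for `0 ≤ p ≤ 1`, where `R`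
and `T` are even because `F` is.

Integrating `R - T` by parts turns this into `∫ t in 0..2π, k (p cos t) = 0` with
`k s = s ∫ x in 0..s, (R - T) + (1 - s²) T s`. This Abel-type equation forces `k = 0` on `[0, 1]`:
integrating `k x` against the radial weight `√(σ² - x² - y²)` over a disc gives zero in polar
coordinates, and a multiple of `∫ x in -σ..σ, (σ² - x²) k x` in Cartesian ones. The derivative of
`k` at `1` yields `R 1 = 3 T 1`. At the pole `R` and `T` are explicit combinations of `F a w w` and
`F a V V`, and this relation reduces to `F a V V = 0`.
-/

namespace EvenTensor

open MeasureTheory Set Filter Topology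

lemma integral_sqrt_sub_sq (c : ℝ) : ∫ y, √(c - y ^ 2) = π / 2 * max c 0 := by
  rcases le_or_gt c 0 with hc | hc
  · have hzero (y : ℝ) : √(c - y ^ 2) = 0 := sqrt_eq_zero_of_nonpos (by nlinarith)
    simp [hzero, hc]
  have hunit : ∫ y : ℝ, √(1 - y ^ 2) = π / 2 := by
    rw [← integral_sqrt_one_sub_sq, integral_of_le (by norm_num),
      setIntegral_eq_integral_of_forall_compl_eq_zero]
    intro y hy
    refine sqrt_eq_zero_of_nonpos (sub_nonpos.mpr ?_)
    rw [one_le_sq_iff_one_le_abs]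
    by_contra! hlt
    exact hy ⟨(abs_lt.mp hlt).1, (abs_lt.mp hlt).2.le⟩
  have hscale (y : ℝ) : √(c - (√c * y) ^ 2) = √c * √(1 - y ^ 2) := by
    rw [← sqrt_mul hc.le, mul_pow, sq_sqrt hc.le, mul_sub, mul_one]
  have hcomp := Measure.integral_comp_mul_left (fun y ↦ √(c - y ^ 2)) (√c)
  simp only [hscale, MeasureTheory.integral_const_mul, hunit, smul_eq_mul, abs_inv,
    abs_of_nonneg (sqrt_nonneg c)] at hcomp
  rw [eq_inv_mul_iff_mul_eq₀ (sqrt_pos.mpr hc).ne', ← mul_assoc, mul_self_sqrt hc.le] at hcomp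
  rw [← hcomp, max_eq_left hc.le, mul_comm]

-- `√` vanishes on negative reals, so this function is supported in the disc of radius `|σ|`.
lemma integrable_mul_sqrt_disc {k : ℝ → ℝ} (hk : Continuous k) (σ : ℝ) :
    Integrable fun z : ℝ × ℝ ↦ k z.1 * √(σ ^ 2 - z.1 ^ 2 - z.2 ^ 2) := by
  refine Continuous.integrable_of_hasCompactSupport (by fun_prop)
    (.intro ((isCompact_Icc (a := -|σ|) (b := |σ|)).prod
      (isCompact_Icc (a := -|σ|) (b := |σ|))) fun z hz ↦ ?_)
  rw [sqrt_eq_zero_of_nonpos, mul_zero]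
  by_contra! hpos
  exact hz ⟨abs_le.mp (sq_le_sq.mp (by nlinarith)), abs_le.mp (sq_le_sq.mp (by nlinarith))⟩

lemma integral_mul_sqrt_disc {k : ℝ → ℝ} (hk : Continuous k) {σ : ℝ} (hσ : 0 ≤ σ) :
    ∫ z : ℝ × ℝ, k z.1 * √(σ ^ 2 - z.1 ^ 2 - z.2 ^ 2) =
      π / 2 * ∫ x in -σ..σ, (σ ^ 2 - x ^ 2) * k x := by
  have hsupp : ∀ x ∉ Ioc (-σ) σ, k x * (π / 2 * max (σ ^ 2 - x ^ 2) 0) = 0 := by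
    intro x hx
    have hle : σ ^ 2 ≤ x ^ 2 := by
      by_contra! hlt
      obtain ⟨hl, hr⟩ := abs_lt.mp (abs_lt_of_sq_lt_sq hlt hσ)
      exact hx ⟨hl, hr.le⟩
    simp [hle]
  rw [Measure.volume_eq_prod, integral_prod _ (integrable_mul_sqrt_disc hk σ)]
  simp only [MeasureTheory.integral_const_mul, integral_sqrt_sub_sq]
  rw [← setIntegral_eq_integral_of_forall_compl_eq_zero hsupp, ← integral_of_le (by linarith),
    ← intervalIntegral.integral_const_mul]
  refine integral_congr fun x hx ↦ ?_
  rw [uIcc_of_le (by linarith)] at hx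
  have hle : 0 ≤ σ ^ 2 - x ^ 2 := by nlinarith [hx.1, hx.2]
  simp only [max_eq_left hle]
  ring

lemma integral_mul_sqrt_disc_eq_zero {k : ℝ → ℝ} (hk : Continuous k) {σ : ℝ} (hσ : 0 ≤ σ)
    (h : ∀ p ∈ Icc 0 σ, ∫ t in (0 : ℝ)..2 * π, k (p * cos t) = 0) :
    ∫ z : ℝ × ℝ, k z.1 * √(σ ^ 2 - z.1 ^ 2 - z.2 ^ 2) = 0 := by
  let g : ℝ × ℝ → ℝ := fun z ↦ z.1 * √(σ ^ 2 - z.1 ^ 2) * k (z.1 * cos z.2)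
  have hpolar (z : ℝ × ℝ) : z.1 • (k (polarCoord.symm z).1 *
      √(σ ^ 2 - (polarCoord.symm z).1 ^ 2 - (polarCoord.symm z).2 ^ 2)) = g z := by
    have hnorm : σ ^ 2 - (z.1 * cos z.2) ^ 2 - (z.1 * sin z.2) ^ 2 = σ ^ 2 - z.1 ^ 2 := by
      linear_combination -z.1 ^ 2 * sin_sq_add_cos_sq z.2
    simp only [polarCoord_symm_apply, hnorm, smul_eq_mul, g]
    ring
  have hsupp {p : ℝ} (hp : σ < p) : √(σ ^ 2 - p ^ 2) = 0 :=
    sqrt_eq_zero_of_nonpos (by nlinarith)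
  have hint : IntegrableOn g (Ioi 0 ×ˢ Ioo (-π) π) := by
    have hcompact : IntegrableOn g (Icc 0 σ ×ˢ Icc (-π) π) :=
      Continuous.continuousOn (by fun_prop) |>.integrableOn_compact
        (isCompact_Icc.prod isCompact_Icc)
    refine hcompact.of_forall_sdiff_eq_zero (by measurability) fun z hz ↦ ?_
    have hz₁ : σ < z.1 := by
      by_contra! hle
      exact hz.2 ⟨⟨le_of_lt hz.1.1, hle⟩, Ioo_subset_Icc_self hz.1.2⟩
    simp [g, hsupp hz₁]
  have hcircle {p : ℝ} (hp : p ∈ Icc 0 σ) : ∫ t in Ioo (-π) π, k (p * cos t) = 0 := by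
    have hperiod : Function.Periodic (fun t ↦ k (p * cos t)) (2 * π) := fun t ↦ by simp
    have hshift := hperiod.intervalIntegral_add_eq (-π) 0
    rw [show -π + 2 * π = π by ring, zero_add, h p hp] at hshift
    rw [← integral_Ioc_eq_integral_Ioo, ← integral_of_le (by linarith [pi_pos]), hshift]
  rw [← integral_comp_polarCoord_symm, polarCoord_target]
  simp only [hpolar]
  rw [Measure.volume_eq_prod, setIntegral_prod _ hint]
  refine setIntegral_eq_zero_of_forall_eq_zero fun p hp ↦ ?_
  simp only [g, MeasureTheory.integral_const_mul]
  rcases le_or_gt p σ with hpσ | hpσ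
  · rw [hcircle ⟨le_of_lt hp, hpσ⟩, mul_zero]
  · rw [hsupp hpσ, mul_zero, zero_mul]

lemma integral_even_mul_eq_integral_mul_add_comp_neg {k w : ℝ → ℝ} (hk : Continuous k)
    (hw : Continuous w) (hw_even : ∀ x, w (-x) = w x) (σ : ℝ) :
    ∫ x in -σ..σ, w x * k x = ∫ x in (0 : ℝ)..σ, w x * (k x + k (-x)) := by
  have hint (a b : ℝ) : IntervalIntegrable (fun x ↦ w x * k x) volume a b :=
    Continuous.intervalIntegrable (by fun_prop) _ _
  have hneg : ∫ x in -σ..0, w x * k x = ∫ x in (0 : ℝ)..σ, w x * k (-x) := by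
    have := integral_comp_neg (a := 0) (b := σ) fun x ↦ w x * k x
    simpa [hw_even] using this.symm
  rw [← integral_add_adjacent_intervals (hint _ 0) (hint _ _), hneg, add_comm,
    ← integral_add (hint _ _) (Continuous.intervalIntegrable (by fun_prop) _ _)]
  simp only [mul_add]

lemma hasDerivAt_eq_zero_of_eqOn_Ioo {g : ℝ → ℝ} {g' a b s : ℝ} (hs : s ∈ Ioo a b)
    (hg : EqOn g 0 (Ioo a b)) (h : HasDerivAt g g' s) : g' = 0 :=
  h.unique <| (hasDerivAt_const s 0).congr_of_eventuallyEq <|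
    hg.eventuallyEq_of_mem (Ioo_mem_nhds hs.1 hs.2)

lemma hasDerivAt_integral_sq_sub_sq_mul {f : ℝ → ℝ} (hf : Continuous f) (s : ℝ) :
    HasDerivAt (fun σ ↦ ∫ x in (0 : ℝ)..σ, (σ ^ 2 - x ^ 2) * f x)
      (2 * s * ∫ x in (0 : ℝ)..s, f x) s := by
  have hsplit (σ : ℝ) : ∫ x in (0 : ℝ)..σ, (σ ^ 2 - x ^ 2) * f x =
      σ ^ 2 * (∫ x in (0 : ℝ)..σ, f x) - ∫ x in (0 : ℝ)..σ, x ^ 2 * f x := by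
    simp only [sub_mul]
    rw [intervalIntegral.integral_sub, intervalIntegral.integral_const_mul] <;>
      exact Continuous.intervalIntegrable (by fun_prop) _ _
  have hint {f : ℝ → ℝ} (hf : Continuous f) : HasDerivAt (fun σ ↦ ∫ x in (0 : ℝ)..σ, f x) (f s) s :=
    (hf.integral_hasStrictDerivAt 0 s).hasDerivAt
  simp only [hsplit]
  refine (((hasDerivAt_pow 2 s).mul (hint hf)).sub
    (hint (f := fun x ↦ x ^ 2 * f x) (by fun_prop))).congr_deriv ?_
  push_cast
  ring

lemma add_comp_neg_eq_zero_of_integral_comp_mul_cos_eq_zero {k : ℝ → ℝ} (hk : Continuous k)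
    {r : ℝ} (hr : 0 < r) (h : ∀ p ∈ Icc 0 r, ∫ t in (0 : ℝ)..2 * π, k (p * cos t) = 0) :
    ∀ s ∈ Icc 0 r, k s + k (-s) = 0 := by
  have hweighted : EqOn (fun σ ↦ ∫ x in (0 : ℝ)..σ, (σ ^ 2 - x ^ 2) * (k x + k (-x))) 0
      (Ioo 0 r) := by
    intro σ hσ
    have hdisc := integral_mul_sqrt_disc_eq_zero hk hσ.1.le fun p hp ↦
      h p ⟨hp.1, hp.2.trans hσ.2.le⟩
    rw [integral_mul_sqrt_disc hk hσ.1.le,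
      integral_even_mul_eq_integral_mul_add_comp_neg hk (by fun_prop) (fun x ↦ by ring) σ] at hdisc
    exact (mul_eq_zero.mp hdisc).resolve_left (by positivity)
  have hprimitive : EqOn (fun σ ↦ ∫ x in (0 : ℝ)..σ, (k x + k (-x))) 0 (Ioo 0 r) := by
    intro σ hσ
    have hderiv := hasDerivAt_eq_zero_of_eqOn_Ioo hσ hweighted
      (hasDerivAt_integral_sq_sub_sq_mul (by fun_prop) σ)
    exact (mul_eq_zero.mp hderiv).resolve_left (by linarith [hσ.1])
  have hinterior : EqOn (fun s ↦ k s + k (-s)) 0 (Ioo 0 r) := fun s hs ↦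
    hasDerivAt_eq_zero_of_eqOn_Ioo hs hprimitive
      (Continuous.integral_hasStrictDerivAt (by fun_prop) 0 s).hasDerivAt
  rw [← closure_Ioo hr.ne]
  exact hinterior.closure (by fun_prop) continuous_const

lemma integral_sin_mul_comp_cos {g : ℝ → ℝ} (hg : Continuous g) (p : ℝ) :
    ∫ t in (0 : ℝ)..2 * π, p * sin t * g (p * cos t) = 0 := by
  have hsubst := integral_comp_mul_deriv (a := 0) (b := 2 * π) (f := fun t ↦ p * cos t)
    (fun t _ ↦ (hasDerivAt_cos t).const_mul p) (by fun_prop) hg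
  rw [cos_zero, cos_two_pi, integral_same] at hsubst
  calc
    _ = -∫ t in (0 : ℝ)..2 * π, (g ∘ fun t ↦ p * cos t) t * (p * -sin t) := by
      rw [← intervalIntegral.integral_neg]
      refine integral_congr fun t _ ↦ ?_
      simp only [Function.comp_apply]
      ring
    _ = 0 := by rw [hsubst, neg_zero]

lemma integral_sq_mul_sin_mul_comp_cos {g : ℝ → ℝ} (hg : Continuous g) (p : ℝ) :
    ∫ t in (0 : ℝ)..2 * π, (p * sin t) ^ 2 * g (p * cos t) =
      ∫ t in (0 : ℝ)..2 * π, p * cos t * ∫ x in (0 : ℝ)..p * cos t, g x := by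
  have hG (s : ℝ) : HasDerivAt (fun s ↦ ∫ x in (0 : ℝ)..s, g x) (g s) s :=
    (hg.integral_hasStrictDerivAt 0 s).hasDerivAt
  have hparts := integral_mul_deriv_eq_deriv_mul (a := 0) (b := 2 * π)
    (fun t _ ↦ (hasDerivAt_sin t).const_mul p)
    (fun t _ ↦ HasDerivAt.comp t (hG (p * cos t)) ((hasDerivAt_cos t).const_mul p))
    (Continuous.intervalIntegrable (by fun_prop) _ _)
    (Continuous.intervalIntegrable (by fun_prop) _ _)
  simp only [sin_zero, sin_two_pi, mul_zero, zero_mul, sub_zero, zero_sub] at hparts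
  calc
    _ = -∫ t in (0 : ℝ)..2 * π, p * sin t * (g (p * cos t) * (p * -sin t)) := by
      rw [← intervalIntegral.integral_neg]
      refine integral_congr fun t _ ↦ ?_
      ring
    _ = _ := by rw [hparts, neg_neg, Function.comp_def]

lemma eq_two_mul_of_mul_add_one_sub_sq_mul_eq_zero {J T : ℝ → ℝ} {J' : ℝ} (hJ : HasDerivAt J J' 1)
    (hT : ContinuousAt T 1) (h : ∀ s ∈ Ioc (0 : ℝ) 1, s * J s + (1 - s ^ 2) * T s = 0) :
    J' = 2 * T 1 := by
  have hJ_one : J 1 = 0 := by simpa using h 1 (by simp)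
  have hslope (s : ℝ) (hs : s ∈ Ioo (0 : ℝ) 1) : s * slope J 1 s = (1 + s) * T s := by
    have hs_sub : s - 1 ≠ 0 := by linarith [hs.2]
    rw [slope_def_field, hJ_one, sub_zero]
    field_simp
    linear_combination h s ⟨hs.1, hs.2.le⟩
  have hleft : Tendsto (fun s ↦ s * slope J 1 s) (𝓝[<] 1) (𝓝 (1 * J')) :=
    (tendsto_id.mono_left nhdsWithin_le_nhds).mul <|
      (hasDerivAt_iff_tendsto_slope.mp hJ).mono_left <|
        nhdsWithin_mono _ fun s hs ↦ ne_of_lt hs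
  have hright : Tendsto (fun s ↦ (1 + s) * T s) (𝓝[<] 1) (𝓝 ((1 + 1) * T 1)) :=
    (ContinuousAt.tendsto (by fun_prop)).mono_left nhdsWithin_le_nhds
  have hlim := tendsto_nhds_unique
    (hleft.congr' (eventually_of_mem (Ioo_mem_nhdsLT one_pos) hslope)) hright
  linarith

lemma mul_integral_sub_add_eq_zero {R T : ℝ → ℝ} (hR : Continuous R) (hT : Continuous T)
    (hR_even : ∀ s, R (-s) = R s) (hT_even : ∀ s, T (-s) = T s)
    (h : ∀ p ∈ Icc (0 : ℝ) 1, ∫ t in (0 : ℝ)..2 * π,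
      ((p * sin t) ^ 2 * R (p * cos t) + (1 - p ^ 2) * T (p * cos t)) = 0) :
    ∀ s ∈ Icc (0 : ℝ) 1, s * (∫ x in (0 : ℝ)..s, (R x - T x)) + (1 - s ^ 2) * T s = 0 := by
  intro s hs
  let J : ℝ → ℝ := fun s ↦ ∫ x in (0 : ℝ)..s, (R x - T x)
  let k : ℝ → ℝ := fun s ↦ s * J s + (1 - s ^ 2) * T s
  have hJ : Continuous J :=
    continuous_primitive (fun _ _ ↦ Continuous.intervalIntegrable (by fun_prop) _ _) 0
  have hJ_odd : J (-s) = -J s := by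
    have hneg := integral_comp_neg (a := 0) (b := s) fun x ↦ R x - T x
    simp only [hR_even, hT_even, neg_zero] at hneg
    simp only [J, hneg, integral_symm (-s) 0]
  have hk (p : ℝ) (hp : p ∈ Icc (0 : ℝ) 1) : ∫ t in (0 : ℝ)..2 * π, k (p * cos t) = 0 := by
    have hsplit (t : ℝ) : k (p * cos t) =
        (p * sin t) ^ 2 * R (p * cos t) + (1 - p ^ 2) * T (p * cos t) +
          (p * cos t * J (p * cos t) - (p * sin t) ^ 2 * (R (p * cos t) - T (p * cos t))) := by
      simp only [k]
      linear_combination -p ^ 2 * T (p * cos t) * sin_sq_add_cos_sq t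
    simp only [hsplit]
    rw [intervalIntegral.integral_add, h p hp, intervalIntegral.integral_sub,
      integral_sq_mul_sin_mul_comp_cos (g := fun x ↦ R x - T x) (by fun_prop) p, sub_self, add_zero]
    all_goals exact Continuous.intervalIntegrable (by fun_prop) _ _
  have hsum := add_comp_neg_eq_zero_of_integral_comp_mul_cos_eq_zero (k := k) (by fun_prop)
    one_pos hk s hs
  simp only [k, hJ_odd, hT_even] at hsum
  linarith

lemma eq_three_mul_of_integral_comp_mul_cos_eq_zero {R T : ℝ → ℝ} (hR : Continuous R)
    (hT : Continuous T) (hR_even : ∀ s, R (-s) = R s) (hT_even : ∀ s, T (-s) = T s)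
    (h : ∀ p ∈ Icc (0 : ℝ) 1, ∫ t in (0 : ℝ)..2 * π,
      ((p * sin t) ^ 2 * R (p * cos t) + (1 - p ^ 2) * T (p * cos t)) = 0) :
    R 1 = 3 * T 1 := by
  have hderiv : HasDerivAt (fun s ↦ ∫ x in (0 : ℝ)..s, (R x - T x)) (R 1 - T 1) 1 :=
    (Continuous.integral_hasStrictDerivAt (by fun_prop) 0 1).hasDerivAt
  have hslope := eq_two_mul_of_mul_add_one_sub_sq_mul_eq_zero hderiv hT.continuousAt
    fun s hs ↦ mul_integral_sub_add_eq_zero hR hT hR_even hT_even h s (Ioc_subset_Icc_self hs)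
  linarith

lemma integral_comp_add_right_of_periodic {f : ℝ → ℝ} {T : ℝ} (hf : Function.Periodic f T)
    (δ : ℝ) : ∫ x in (0 : ℝ)..T, f (x + δ) = ∫ x in (0 : ℝ)..T, f x := by
  rw [integral_comp_add_right, zero_add, add_comm, hf.intervalIntegral_add_eq δ 0, zero_add]

variable {E : Type*} [NormedAddCommGroup E] [InnerProductSpace ℝ E]

/-- The parametrized great circle through `u` with velocity `v`, for `u`, `v` orthonormal. -/
noncomputable def greatCircle (u v : E) (t : ℝ) : E := cos t • u + sin t • v

/-- The velocity of `greatCircle u v` at time `t`. -/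
noncomputable def greatCircleVelocity (u v : E) (t : ℝ) : E := -sin t • u + cos t • v

/-- The point at height `s` and longitude `ψ` of the unit sphere spanned by an orthonormal
triple `e`, with pole `e 0`, for `|s| ≤ 1`. -/
noncomputable def latitudePoint (e : Fin 3 → E) (s ψ : ℝ) : E :=
  s • e 0 + √(1 - s ^ 2) • greatCircle (e 1) (e 2) ψ

/-- The unit tangent to the meridian through `latitudePoint e s ψ`, pointing away from the pole
`e 0`. -/
noncomputable def meridianTangent (e : Fin 3 → E) (s ψ : ℝ) : E :=
  -√(1 - s ^ 2) • e 0 + s • greatCircle (e 1) (e 2) ψ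

/-- The unit tangent to the parallel through `latitudePoint e s ψ`; it does not depend on the
height `s`, which is kept so that it has the same type as `meridianTangent e`. -/
noncomputable def parallelTangent (e : Fin 3 → E) (_s ψ : ℝ) : E :=
  greatCircleVelocity (e 1) (e 2) ψ

/-- The great circle whose highest point is `latitudePoint e p φ`, for `0 ≤ p ≤ 1`. -/
noncomputable def tiltedCircle (e : Fin 3 → E) (p φ t : ℝ) : E :=
  greatCircle (latitudePoint e p φ) (parallelTangent e p φ) t

/-- The velocity of `tiltedCircle e p φ` at time `t`. -/
noncomputable def tiltedCircleVelocity (e : Fin 3 → E) (p φ t : ℝ) : E :=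
  greatCircleVelocity (latitudePoint e p φ) (parallelTangent e p φ) t

/-- The integral of the component `F (X, Y)` over the parallel at height `s`, weighted by the
square of the cosine of the longitude. -/
noncomputable def latitudeMean (F : E → E →L[ℝ] E →L[ℝ] ℝ) (e : Fin 3 → E) (X Y : ℝ → ℝ → E)
    (s : ℝ) : ℝ :=
  ∫ ψ in (0 : ℝ)..2 * π, cos ψ ^ 2 * F (latitudePoint e s ψ) (X s ψ) (Y s ψ)

@[fun_prop]
lemma continuous_greatCircle (u v : E) : Continuous (greatCircle u v) := by
  unfold greatCircle; fun_prop

@[fun_prop]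
lemma continuous_greatCircleVelocity (u v : E) : Continuous (greatCircleVelocity u v) := by
  unfold greatCircleVelocity; fun_prop

lemma greatCircleVelocity_eq_greatCircle (u v : E) :
    greatCircleVelocity u v = greatCircle v (-u) := by
  ext t
  simp only [greatCircleVelocity, greatCircle, smul_neg, neg_smul, add_comm]

lemma greatCircle_add_pi (u v : E) (t : ℝ) : greatCircle u v (t + π) = -greatCircle u v t := by
  simp only [greatCircle, cos_add_pi, sin_add_pi, neg_smul, neg_add]

lemma greatCircle_periodic (u v : E) : Function.Periodic (greatCircle u v) (2 * π) := fun t ↦ by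
  simp only [greatCircle, cos_add_two_pi, sin_add_two_pi]

lemma integral_cos_sq_mul_greatCircle (B : E →L[ℝ] E →L[ℝ] ℝ) (u v : E) :
    ∫ ψ in (0 : ℝ)..2 * π, cos ψ ^ 2 * B (greatCircle u v ψ) (greatCircle u v ψ) =
      3 * π / 4 * B u u + π / 4 * B v v := by
  have hint {f : ℝ → ℝ} (hf : Continuous f) : IntervalIntegrable f volume 0 (2 * π) :=
    hf.intervalIntegrable _ _
  have hexpand (ψ : ℝ) : cos ψ ^ 2 * B (greatCircle u v ψ) (greatCircle u v ψ) =
      cos ψ ^ 4 * B u u + cos ψ ^ 2 * sin ψ ^ 2 * B v v +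
        cos ψ ^ 3 * sin ψ * (B u v + B v u) := by
    simp only [greatCircle, map_add, map_smul, add_apply, smul_apply, smul_eq_mul]
    ring
  have hcos : ∫ ψ in (0 : ℝ)..2 * π, cos ψ ^ 4 = 3 * π / 4 := by
    rw [integral_cos_pow, integral_cos_sq]
    simp only [sin_two_pi, sin_zero, mul_zero, sub_zero, zero_div, zero_add]
    push_cast
    ring
  have hmixed : ∫ ψ in (0 : ℝ)..2 * π, cos ψ ^ 2 * sin ψ ^ 2 = π / 4 := by
    have hsin : sin (4 * (2 * π)) = 0 := by
      rw [← mul_assoc]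
      exact_mod_cast sin_nat_mul_pi (4 * 2)
    simp only [mul_comm (cos _ ^ 2), integral_sin_sq_mul_cos_sq, hsin, mul_zero, sin_zero]
    ring
  have hodd : ∫ ψ in (0 : ℝ)..2 * π, cos ψ ^ 3 * sin ψ = 0 := by
    have hsubst : ∫ ψ in (0 : ℝ)..2 * π, sin ψ ^ 1 * cos ψ ^ 3 = _ :=
      integral_sin_pow_mul_cos_pow_odd 1 1
    rw [sin_zero, sin_two_pi, integral_same] at hsubst
    simpa only [pow_one, mul_comm] using hsubst
  simp only [hexpand]
  rw [intervalIntegral.integral_add (hint (by fun_prop)) (hint (by fun_prop)),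
    intervalIntegral.integral_add (hint (by fun_prop)) (hint (by fun_prop))]
  simp only [intervalIntegral.integral_mul_const, hcos, hmixed, hodd]
  ring

@[fun_prop]
lemma continuous_latitudePoint {X : Type*} [TopologicalSpace X] (e : Fin 3 → E) {s ψ : X → ℝ}
    (hs : Continuous s) (hψ : Continuous ψ) : Continuous fun x ↦ latitudePoint e (s x) (ψ x) := by
  unfold latitudePoint; fun_prop

@[fun_prop]
lemma continuous_meridianTangent {X : Type*} [TopologicalSpace X] (e : Fin 3 → E) {s ψ : X → ℝ}
    (hs : Continuous s) (hψ : Continuous ψ) : Continuous fun x ↦ meridianTangent e (s x) (ψ x) := by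
  unfold meridianTangent; fun_prop

@[fun_prop]
lemma continuous_parallelTangent {X : Type*} [TopologicalSpace X] (e : Fin 3 → E) (s : X → ℝ)
    {ψ : X → ℝ} (hψ : Continuous ψ) : Continuous fun x ↦ parallelTangent e (s x) (ψ x) := by
  unfold parallelTangent; fun_prop

@[fun_prop]
lemma continuous_tiltedCircle {X : Type*} [TopologicalSpace X] (e : Fin 3 → E) (p : ℝ)
    {φ t : X → ℝ} (hφ : Continuous φ) (ht : Continuous t) :
    Continuous fun x ↦ tiltedCircle e p (φ x) (t x) := by
  unfold tiltedCircle greatCircle; fun_prop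

@[fun_prop]
lemma continuous_tiltedCircleVelocity {X : Type*} [TopologicalSpace X] (e : Fin 3 → E) (p : ℝ)
    {φ t : X → ℝ} (hφ : Continuous φ) (ht : Continuous t) :
    Continuous fun x ↦ tiltedCircleVelocity e p (φ x) (t x) := by
  unfold tiltedCircleVelocity greatCircleVelocity; fun_prop

lemma latitudePoint_periodic (e : Fin 3 → E) (s : ℝ) :
    Function.Periodic (latitudePoint e s) (2 * π) := fun ψ ↦ by
  simp only [latitudePoint, greatCircle_periodic _ _ ψ]

lemma meridianTangent_periodic (e : Fin 3 → E) (s : ℝ) :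
    Function.Periodic (meridianTangent e s) (2 * π) := fun ψ ↦ by
  simp only [meridianTangent, greatCircle_periodic _ _ ψ]

lemma parallelTangent_periodic (e : Fin 3 → E) (s : ℝ) :
    Function.Periodic (parallelTangent e s) (2 * π) := fun ψ ↦ by
  simp only [parallelTangent, greatCircleVelocity_eq_greatCircle, greatCircle_periodic _ _ ψ]

lemma latitudePoint_neg (e : Fin 3 → E) (s ψ : ℝ) :
    latitudePoint e (-s) ψ = -latitudePoint e s (ψ + π) := by
  simp only [latitudePoint, greatCircle_add_pi, neg_sq]
  module

lemma meridianTangent_neg (e : Fin 3 → E) (s ψ : ℝ) :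
    meridianTangent e (-s) ψ = meridianTangent e s (ψ + π) := by
  simp only [meridianTangent, greatCircle_add_pi, neg_sq]
  module

lemma parallelTangent_neg (e : Fin 3 → E) (s ψ : ℝ) :
    parallelTangent e (-s) ψ = -parallelTangent e s (ψ + π) := by
  simp only [parallelTangent, greatCircleVelocity_eq_greatCircle, greatCircle_add_pi, neg_neg]

section OrthonormalTriple

variable {e : Fin 3 → E}

lemma norm_latitudePoint (he : Orthonormal ℝ e) {s : ℝ} (hs : s ^ 2 ≤ 1) (ψ : ℝ) :
    ‖latitudePoint e s ψ‖ = 1 := by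
  rw [orthonormal_iff_ite] at he
  rw [norm_eq_sqrt_real_inner, sqrt_eq_one]
  simp only [latitudePoint, greatCircle, inner_add_left, inner_add_right, real_inner_smul_left,
    real_inner_smul_right, he, Fin.reduceEq, if_true, if_false]
  linear_combination sq_sqrt (sub_nonneg.mpr hs) +
    √(1 - s ^ 2) ^ 2 * sin_sq_add_cos_sq ψ

lemma norm_parallelTangent (he : Orthonormal ℝ e) (s ψ : ℝ) : ‖parallelTangent e s ψ‖ = 1 := by
  rw [orthonormal_iff_ite] at he
  rw [norm_eq_sqrt_real_inner, sqrt_eq_one]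
  simp only [parallelTangent, greatCircleVelocity, inner_add_left, inner_add_right,
    real_inner_smul_left, real_inner_smul_right, he, Fin.reduceEq, if_true, if_false]
  linear_combination sin_sq_add_cos_sq ψ

lemma inner_latitudePoint_parallelTangent (he : Orthonormal ℝ e) (s ψ : ℝ) :
    ⟪latitudePoint e s ψ, parallelTangent e s ψ⟫ = 0 := by
  rw [orthonormal_iff_ite] at he
  simp only [latitudePoint, greatCircle, parallelTangent, greatCircleVelocity, inner_add_left,
    inner_add_right, real_inner_smul_left, real_inner_smul_right, he, Fin.reduceEq, if_true,
    if_false]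
  ring

lemma inner_latitudePoint_one (he : Orthonormal ℝ e) (s ψ : ℝ) :
    ⟪latitudePoint e s ψ, e 1⟫ = √(1 - s ^ 2) * cos ψ := by
  rw [orthonormal_iff_ite] at he
  simp only [latitudePoint, greatCircle, inner_add_left, real_inner_smul_left, he, Fin.reduceEq,
    if_true, if_false]
  ring

end OrthonormalTriple

lemma exists_sqrt_mul_cos_sin (x y : ℝ) :
    ∃ δ, √(x ^ 2 + y ^ 2) * cos δ = x ∧ √(x ^ 2 + y ^ 2) * sin δ = y := by
  have hnorm : √(x ^ 2 + y ^ 2) = ‖(⟨x, y⟩ : ℂ)‖ := by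
    rw [Complex.norm_def, Complex.normSq_mk, sq, sq]
  exact ⟨Complex.arg ⟨x, y⟩, hnorm ▸ Complex.norm_mul_cos_arg _,
    hnorm ▸ Complex.norm_mul_sin_arg _⟩

-- The factor `√(1 - (p * cos t) ^ 2)` stays on the left because it is `0` when the circle meets a
-- pole.
lemma exists_tiltedCircle_eq_latitudePoint (e : Fin 3 → E) {p : ℝ} (hp : p ^ 2 ≤ 1) (t : ℝ) :
    ∃ δ, ∀ φ, tiltedCircle e p φ t = latitudePoint e (p * cos t) (φ + δ) ∧
      √(1 - (p * cos t) ^ 2) • tiltedCircleVelocity e p φ t =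
        (p * sin t) • meridianTangent e (p * cos t) (φ + δ) +
          √(1 - p ^ 2) • parallelTangent e (p * cos t) (φ + δ) := by
  have hq : √(1 - p ^ 2) ^ 2 = 1 - p ^ 2 := sq_sqrt (by linarith)
  obtain ⟨δ, hcos, hsin⟩ := exists_sqrt_mul_cos_sin (√(1 - p ^ 2) * cos t) (sin t)
  have hradius : (√(1 - p ^ 2) * cos t) ^ 2 + sin t ^ 2 = 1 - (p * cos t) ^ 2 := by
    linear_combination cos t ^ 2 * hq + sin_sq_add_cos_sq t
  rw [hradius] at hcos hsin
  simp only [tiltedCircle, tiltedCircleVelocity, latitudePoint, meridianTangent, parallelTangent,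
    greatCircle, greatCircleVelocity, cos_add, sin_add]
  generalize √(1 - p ^ 2) = q at *
  generalize √(1 - (p * cos t) ^ 2) = ρ at *
  refine ⟨δ, fun φ ↦ ⟨?_, ?_⟩⟩
  · match_scalars
    · ring
    · linear_combination -cos φ * hcos + sin φ * hsin
    · linear_combination -sin φ * hcos - cos φ * hsin
  · have hradial : ρ * (cos t * sin δ - q * sin t * cos δ) = p * sin t * (p * cos t) := by
      linear_combination cos t * hsin - q * sin t * hcos - sin t * cos t * hq
    have htangential : ρ * (q * sin t * sin δ + cos t * cos δ) = q := by
      linear_combination q * sin t * hsin + cos t * hcos + q * sin_sq_add_cos_sq t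
    match_scalars
    · ring
    · linear_combination (cos φ * cos δ - sin φ * sin δ) * hradial -
        (sin φ * cos δ + cos φ * sin δ) * htangential +
        ρ * (q * sin t * cos φ + cos t * sin φ) * sin_sq_add_cos_sq δ
    · linear_combination (sin φ * cos δ + cos φ * sin δ) * hradial +
        (cos φ * cos δ - sin φ * sin δ) * htangential +
        ρ * (q * sin t * sin φ - cos t * cos φ) * sin_sq_add_cos_sq δ

lemma sq_mul_apply_self_of_smul_eq (B : E →L[ℝ] E →L[ℝ] ℝ) {ρ m q : ℝ} {V M P : E}
    (h : ρ • V = m • M + q • P) :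
    ρ ^ 2 * B V V = m ^ 2 * B M M + q ^ 2 * B P P + q * m * (B M P + B P M) := by
  calc
    ρ ^ 2 * B V V = B (ρ • V) (ρ • V) := by
      simp only [map_smul, smul_apply, smul_eq_mul]
      ring
    _ = _ := by
      simp only [h, map_add, map_smul, add_apply, smul_apply, smul_eq_mul]
      ring

section LatitudeMean

variable {F : E → E →L[ℝ] E →L[ℝ] ℝ} {e : Fin 3 → E} {X Y : ℝ → ℝ → E}

@[fun_prop]
lemma continuous_latitudeMean (hF : Continuous F) (hX : Continuous fun z : ℝ × ℝ ↦ X z.1 z.2)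
    (hY : Continuous fun z : ℝ × ℝ ↦ Y z.1 z.2) : Continuous (latitudeMean F e X Y) :=
  continuous_parametric_intervalIntegral_of_continuous' (by fun_prop) _ _

lemma integral_latitude_comp_add (hX : ∀ s, Function.Periodic (X s) (2 * π))
    (hY : ∀ s, Function.Periodic (Y s) (2 * π)) (s δ : ℝ) :
    ∫ φ in (0 : ℝ)..2 * π,
      cos (φ + δ) ^ 2 * F (latitudePoint e s (φ + δ)) (X s (φ + δ)) (Y s (φ + δ)) =
        latitudeMean F e X Y s :=
  integral_comp_add_right_of_periodic
    (f := fun ψ ↦ cos ψ ^ 2 * F (latitudePoint e s ψ) (X s ψ) (Y s ψ))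
    (fun ψ ↦ by simp only [cos_add_two_pi, latitudePoint_periodic e s ψ, hX s ψ, hY s ψ]) δ

lemma latitudeMean_neg (heven : ∀ x, F (-x) = F x) (hX : ∀ s, Function.Periodic (X s) (2 * π))
    (hY : ∀ s, Function.Periodic (Y s) (2 * π)) {s : ℝ}
    (hXY : ∀ x ψ, F x (X (-s) ψ) (Y (-s) ψ) = F x (X s (ψ + π)) (Y s (ψ + π))) :
    latitudeMean F e X Y (-s) = latitudeMean F e X Y s := by
  rw [← integral_latitude_comp_add hX hY s π]
  simp only [latitudeMean, latitudePoint_neg, heven, hXY, cos_add_pi, neg_sq]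

lemma integral_tiltedCircle_eq_latitudeMean (hF : Continuous F) (he : Orthonormal ℝ e) {p : ℝ}
    (hp : p ^ 2 ≤ 1) (t : ℝ) :
    ∫ φ in (0 : ℝ)..2 * π, ⟪tiltedCircle e p φ t, e 1⟫ ^ 2 *
        F (tiltedCircle e p φ t) (tiltedCircleVelocity e p φ t) (tiltedCircleVelocity e p φ t) =
      (p * sin t) ^ 2 * latitudeMean F e (meridianTangent e) (meridianTangent e) (p * cos t) +
      (1 - p ^ 2) * latitudeMean F e (parallelTangent e) (parallelTangent e) (p * cos t) +
      √(1 - p ^ 2) * (p * sin t) *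
        (latitudeMean F e (meridianTangent e) (parallelTangent e) (p * cos t) +
          latitudeMean F e (parallelTangent e) (meridianTangent e) (p * cos t)) := by
  obtain ⟨δ, hδ⟩ := exists_tiltedCircle_eq_latitudePoint e hp t
  have hint {f : ℝ → ℝ} (hf : Continuous f) : IntervalIntegrable f volume 0 (2 * π) :=
    hf.intervalIntegrable _ _
  let component (X Y : ℝ → ℝ → E) (φ : ℝ) : ℝ := cos (φ + δ) ^ 2 *
    F (latitudePoint e (p * cos t) (φ + δ)) (X (p * cos t) (φ + δ)) (Y (p * cos t) (φ + δ))
  have hexpand (φ : ℝ) : ⟪tiltedCircle e p φ t, e 1⟫ ^ 2 *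
      F (tiltedCircle e p φ t) (tiltedCircleVelocity e p φ t) (tiltedCircleVelocity e p φ t) =
      (p * sin t) ^ 2 * component (meridianTangent e) (meridianTangent e) φ +
      (1 - p ^ 2) * component (parallelTangent e) (parallelTangent e) φ +
      √(1 - p ^ 2) * (p * sin t) * (component (meridianTangent e) (parallelTangent e) φ +
        component (parallelTangent e) (meridianTangent e) φ) := by
    rw [(hδ φ).1, inner_latitudePoint_one he]
    linear_combination cos (φ + δ) ^ 2 * sq_mul_apply_self_of_smul_eq
      (F (latitudePoint e (p * cos t) (φ + δ))) (hδ φ).2 +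
      component (parallelTangent e) (parallelTangent e) φ * sq_sqrt (sub_nonneg.mpr hp)
  simp only [hexpand, component]
  rw [intervalIntegral.integral_add (hint (by fun_prop)) (hint (by fun_prop)),
    intervalIntegral.integral_add (hint (by fun_prop)) (hint (by fun_prop))]
  simp only [intervalIntegral.integral_const_mul]
  rw [intervalIntegral.integral_add (hint (by fun_prop)) (hint (by fun_prop))]
  simp only [integral_latitude_comp_add, meridianTangent_periodic, parallelTangent_periodic,
    implies_true]

lemma integral_latitudeMean_eq_zero (hF : Continuous F) (he : Orthonormal ℝ e) {p : ℝ}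
    (hp : p ^ 2 ≤ 1)
    (h : ∀ φ, ∫ t in (0 : ℝ)..2 * π, ⟪tiltedCircle e p φ t, e 1⟫ ^ 2 *
      F (tiltedCircle e p φ t) (tiltedCircleVelocity e p φ t) (tiltedCircleVelocity e p φ t) = 0) :
    ∫ t in (0 : ℝ)..2 * π,
      ((p * sin t) ^ 2 * latitudeMean F e (meridianTangent e) (meridianTangent e) (p * cos t) +
        (1 - p ^ 2) * latitudeMean F e (parallelTangent e) (parallelTangent e) (p * cos t)) =
      0 := by
  have hswap := intervalIntegral_intervalIntegral_swap (a := 0) (b := 2 * π) (c := 0) (d := 2 * π)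
    (F := fun φ t ↦ ⟪tiltedCircle e p φ t, e 1⟫ ^ 2 *
      F (tiltedCircle e p φ t) (tiltedCircleVelocity e p φ t) (tiltedCircleVelocity e p φ t))
    (((Continuous.continuousOn (by fun_prop)).integrableOn_compact
      (isCompact_uIcc.prod isCompact_uIcc)).mono_set
        (prod_mono uIoc_subset_uIcc uIoc_subset_uIcc))
  simp only [h, intervalIntegral.integral_zero, integral_tiltedCircle_eq_latitudeMean hF he hp]
    at hswap
  rw [intervalIntegral.integral_add] at hswap
  · simp only [mul_assoc (√(1 - p ^ 2)), intervalIntegral.integral_const_mul] at hswap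
    rw [integral_sin_mul_comp_cos (g := fun s ↦
      latitudeMean F e (meridianTangent e) (parallelTangent e) s +
        latitudeMean F e (parallelTangent e) (meridianTangent e) s) (by fun_prop),
      mul_zero, add_zero] at hswap
    exact hswap.symm
  all_goals exact Continuous.intervalIntegrable (by fun_prop) _ _

lemma latitudeMean_meridianTangent_one :
    latitudeMean F e (meridianTangent e) (meridianTangent e) 1 =
      3 * π / 4 * F (e 0) (e 1) (e 1) + π / 4 * F (e 0) (e 2) (e 2) := by
  simp [latitudeMean, latitudePoint, meridianTangent, integral_cos_sq_mul_greatCircle]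

lemma latitudeMean_parallelTangent_one :
    latitudeMean F e (parallelTangent e) (parallelTangent e) 1 =
      3 * π / 4 * F (e 0) (e 2) (e 2) + π / 4 * F (e 0) (e 1) (e 1) := by
  simp [latitudeMean, latitudePoint, parallelTangent, greatCircleVelocity_eq_greatCircle,
    integral_cos_sq_mul_greatCircle]

lemma apply_pole_eq_zero (hF : Continuous F) (heven : ∀ x, F (-x) = F x) (he : Orthonormal ℝ e)
    (h : ∀ u v, ‖u‖ = 1 → ‖v‖ = 1 → ⟪u, v⟫ = 0 → ∫ t in (0 : ℝ)..2 * π,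
      ⟪greatCircle u v t, e 1⟫ ^ 2 *
        F (greatCircle u v t) (greatCircleVelocity u v t) (greatCircleVelocity u v t) = 0) :
    F (e 0) (e 2) (e 2) = 0 := by
  have hmeridian_even (s : ℝ) :
      latitudeMean F e (meridianTangent e) (meridianTangent e) (-s) =
        latitudeMean F e (meridianTangent e) (meridianTangent e) s :=
    latitudeMean_neg heven (meridianTangent_periodic e) (meridianTangent_periodic e)
      fun x ψ ↦ by rw [meridianTangent_neg]
  have hparallel_even (s : ℝ) :
      latitudeMean F e (parallelTangent e) (parallelTangent e) (-s) =
        latitudeMean F e (parallelTangent e) (parallelTangent e) s :=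
    latitudeMean_neg heven (parallelTangent_periodic e) (parallelTangent_periodic e)
      fun x ψ ↦ by simp only [parallelTangent_neg, map_neg, neg_apply, neg_neg]
  have hpole := eq_three_mul_of_integral_comp_mul_cos_eq_zero
    (by fun_prop) (by fun_prop) hmeridian_even hparallel_even fun p hp ↦
      have hp : p ^ 2 ≤ 1 := pow_le_one₀ hp.1 hp.2
      integral_latitudeMean_eq_zero hF he hp fun φ ↦
        h _ _ (norm_latitudePoint he hp φ) (norm_parallelTangent he p φ)
          (inner_latitudePoint_parallelTangent he p φ)
  rw [latitudeMean_meridianTangent_one, latitudeMean_parallelTangent_one] at hpole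
  have hpi : π * F (e 0) (e 2) (e 2) = 0 := by linarith
  exact (mul_eq_zero.mp hpi).resolve_left pi_ne_zero

end LatitudeMean

lemma exists_orthonormal_triple (hE : 3 ≤ Module.rank ℝ E) {x v : E} (hx : ‖x‖ = 1)
    (hv : ‖v‖ = 1) (hxv : ⟪x, v⟫ = 0) :
    ∃ e : Fin 3 → E, Orthonormal ℝ e ∧ e 0 = x ∧ e 2 = v := by
  let S : Submodule ℝ E := Submodule.span ℝ {x, v}
  have : FiniteDimensional ℝ S := .span_of_finite ℝ (toFinite _)
  have hS : Sᗮ ≠ ⊥ := by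
    intro hbot
    have hrank : Module.rank ℝ S ≤ 2 :=
      (rank_span_le _).trans (Cardinal.mk_insert_le.trans (by simp; norm_num))
    rw [Submodule.orthogonal_eq_bot_iff.mp hbot, rank_top] at hrank
    exact absurd (hE.trans hrank) (by norm_num)
  obtain ⟨w, hwS, hw⟩ := Submodule.exists_mem_ne_zero_of_ne_bot hS
  have hwx : ⟪w, x⟫ = 0 :=
    Submodule.inner_left_of_mem_orthogonal (Submodule.subset_span (by simp)) hwS
  have hwv : ⟪w, v⟫ = 0 :=
    Submodule.inner_left_of_mem_orthogonal (Submodule.subset_span (by simp)) hwS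
  refine ⟨![x, ‖w‖⁻¹ • w, v], ⟨fun i ↦ ?_, fun i j hij ↦ ?_⟩, rfl, rfl⟩
  · fin_cases i <;> simp [hx, hv, norm_smul, hw]
  · fin_cases i <;> fin_cases j <;>
      simp_all [real_inner_smul_right, real_inner_comm]

lemma integral_inner_sq_mul_eq_zero {ι : Type*} [Fintype ι] {γ : ℝ → EuclideanSpace ℝ ι}
    (hγ : Continuous γ) {f : ℝ → ℝ} (hf : Continuous f) {a b : ℝ}
    (h : ∀ i j, ∫ t in a..b, γ t i * γ t j * f t = 0) (w : EuclideanSpace ℝ ι) :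
    ∫ t in a..b, ⟪γ t, w⟫ ^ 2 * f t = 0 := by
  have hexpand (t : ℝ) :
      ⟪γ t, w⟫ ^ 2 * f t = ∑ z : ι × ι, w z.1 * w z.2 * (γ t z.1 * γ t z.2 * f t) := by
    rw [sq, PiLp.inner_apply, Finset.sum_mul_sum, ← Fintype.sum_prod_type', Finset.sum_mul]
    refine Finset.sum_congr rfl fun z _ ↦ ?_
    simp only [RCLike.inner_apply, conj_trivial]
    ring
  simp only [hexpand]
  rw [intervalIntegral.integral_finsetSum fun z _ ↦
    Continuous.intervalIntegrable (by fun_prop) _ _]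
  exact Finset.sum_eq_zero fun z _ ↦ by rw [intervalIntegral.integral_const_mul, h, mul_zero]

end EvenTensor

theorem even_tensor_vanishes_of_quadratic_weighted_integrals_general {E : Type*}
    [NormedAddCommGroup E] [InnerProductSpace ℝ E] (hE : 3 ≤ Module.rank ℝ E)
    (F : E → E →L[ℝ] E →L[ℝ] ℝ) (hF : Continuous F) (heven : ∀ x, F (-x) = F x)
    (h : ∀ u v : E, ‖u‖ = 1 → ‖v‖ = 1 → ⟪u, v⟫ = 0 → ∀ w : E,
      ∫ t in (0 : ℝ)..2 * π, ⟪cos t • u + sin t • v, w⟫ ^ 2 *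
        F (cos t • u + sin t • v) (-sin t • u + cos t • v) (-sin t • u + cos t • v) = 0)
    (x V : E) (hx : ‖x‖ = 1) (hxV : ⟪x, V⟫ = 0) : F x V V = 0 := by
  rcases eq_or_ne V 0 with rfl | hV
  · simp
  obtain ⟨e, he, rfl, hV'⟩ := EvenTensor.exists_orthonormal_triple hE hx
    (norm_smul_inv_norm (𝕜 := ℝ) hV) (by rw [inner_smul_right, hxV, mul_zero])
  have hzero := EvenTensor.apply_pole_eq_zero hF heven he fun u v hu hv huv ↦ h u v hu hv huv (e 1)
  simpa [hV', hV] using hzero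

/-- Proposition 3.2: an even smooth symmetric 2-cotensor field on `ℝⁿ` whose
great-circle integrals weighted by all products of two coordinates vanish is zero
on tangent vectors to the unit sphere. -/
theorem even_tensor_vanishes_of_quadratic_weighted_integrals
    (n : ℕ) (hn : 3 ≤ n)
    (F : EuclideanSpace ℝ (Fin n) →
      (EuclideanSpace ℝ (Fin n) →L[ℝ] EuclideanSpace ℝ (Fin n) →L[ℝ] ℝ))
    (hF : ContDiff ℝ (⊤ : ℕ∞) F)
    (hsymm : ∀ x V W, F x V W = F x W V)
    (heven : ∀ x V W, F (-x) V W = F x V W)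
    (h : ∀ u v : EuclideanSpace ℝ (Fin n), ‖u‖ = 1 → ‖v‖ = 1 → ⟪u, v⟫ = 0 →
      ∀ i j : Fin n,
        ∫ t in (0:ℝ)..(2 * π),
          (Real.cos t • u + Real.sin t • v : EuclideanSpace ℝ (Fin n)) i *
            (Real.cos t • u + Real.sin t • v : EuclideanSpace ℝ (Fin n)) j *
            F (Real.cos t • u + Real.sin t • v)
              (-Real.sin t • u + Real.cos t • v) (-Real.sin t • u + Real.cos t • v)
          = 0) :
    ∀ x V : EuclideanSpace ℝ (Fin n), ‖x‖ = 1 → ⟪x, V⟫ = 0 → F x V V = 0 := by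
  have hFc := hF.continuous
  have hF_even (x) : F (-x) = F x :=
    ContinuousLinearMap.ext fun V ↦ ContinuousLinearMap.ext (heven x V)
  refine even_tensor_vanishes_of_quadratic_weighted_integrals_general ?_ F hFc hF_even
    fun u v hu hv huv w ↦ EvenTensor.integral_inner_sq_mul_eq_zero (by fun_prop) (by fun_prop)
      (h u v hu hv huv) w
  rw [← Module.finrank_eq_rank, finrank_euclideanSpace_fin]
  exact_mod_cast hn
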